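/- Let z₀, γ₀ ∈ 𝔻 and γ₁, γ₂ ∈ 𝔻. For ε in the closed unit disk define f_ε(z) := T_{γ₀}(T_{−z₀}(z)·T_{γ₁}(T_{−z₀}(z)·T_{γ₂}(ε·T_{−z₀}(z)))). Then every f_ε belongs to ℋ with f_ε(z₀) = γ₀, H¹f_ε(z₀) = γ₁, H²f_ε(z₀) = γ₂, and moreover {f'''(z₀) : f ∈ ℋ, f(z₀) = γ₀, H¹f(z₀) = γ₁, H²f(z₀) = γ₂} = {f_ε'''(z₀) : |ε| ≤ 1}. -/

import Mathlib

open Complex Metric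

/-- `ℋ`: analytic self-maps of the open unit disk. -/
def Hclass (f : ℂ → ℂ) : Prop :=
  DifferentiableOn ℂ f (ball (0 : ℂ) 1) ∧ Set.MapsTo f (ball (0 : ℂ) 1) (ball (0 : ℂ) 1)

/-- The Möbius transformation `T_a(z) = (z + a)/(1 + conj(a) z)`. -/
noncomputable def T (a z : ℂ) : ℂ := (z + a) / (1 + (starRingEnd ℂ) a * z)

/-- The (first-order) hyperbolic derivative `H¹f(z) = (1-|z|²)f'(z)/(1-|f(z)|²)`. -/
noncomputable def H1 (f : ℂ → ℂ) (z : ℂ) : ℂ :=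
  ((1 - ‖z‖ ^ 2 : ℝ) : ℂ) * deriv f z / ((1 - ‖f z‖ ^ 2 : ℝ) : ℂ)

/-- The second Peschl invariant derivative `D₂f(z)`. -/
noncomputable def D2 (f : ℂ → ℂ) (z : ℂ) : ℂ :=
  ((1 - ‖z‖ ^ 2 : ℝ) : ℂ) ^ 2 / ((1 - ‖f z‖ ^ 2 : ℝ) : ℂ) *
    (iteratedDeriv 2 f z - 2 * (starRingEnd ℂ) z * deriv f z / ((1 - ‖z‖ ^ 2 : ℝ) : ℂ) +
      2 * (starRingEnd ℂ) (f z) * (deriv f z) ^ 2 / ((1 - ‖f z‖ ^ 2 : ℝ) : ℂ))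

/-- The second-order hyperbolic derivative `H²f(z) = D₂f(z)/(2(1-|H¹f(z)|²))`. -/
noncomputable def H2 (f : ℂ → ℂ) (z : ℂ) : ℂ :=
  D2 f z / (2 * ((1 - ‖H1 f z‖ ^ 2 : ℝ) : ℂ))

/-- The extremal candidates
`f_ε(z) = T_{γ₀}(T_{-z₀}(z)·T_{γ₁}(T_{-z₀}(z)·T_{γ₂}(ε·T_{-z₀}(z))))`. -/
noncomputable def fE (z₀ γ₀ γ₁ γ₂ ε z : ℂ) : ℂ :=
  T γ₀ (T (-z₀) z * T γ₁ (T (-z₀) z * T γ₂ (ε * T (-z₀) z)))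

/-!
Dividing out the zero of `T_{-f(z₀)} ∘ f` at `z₀` (one step of the Schur algorithm) writes
`f = T_{γ₀}(T_{-z₀} · g)`. By the Schwarz lemma `g` is again bounded by `1`, and
`g(z₀) = H¹f(z₀)`, `H¹g(z₀) = H²f(z₀)`. Three steps parametrize all `f` with the prescribed data by
an arbitrary analytic `k` with `|k| ≤ 1`, and `f_ε` is the case `k = ε`. Each step raises the order
of contact at `z₀` by one. Since `k` agrees with the constant `k(z₀)` to order one, `f` agrees with
`f_{k(z₀)}` to order four, so their third derivatives at `z₀` coincide.
-/

open Filter Set Topology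
open scoped ComplexConjugate

section Calculus

variable {𝕜 : Type*} [NontriviallyNormedField 𝕜] {x : 𝕜}

lemma iteratedDeriv_two_fun_mul {f g : 𝕜 → 𝕜} (hf : ContDiffAt 𝕜 2 f x)
    (hg : ContDiffAt 𝕜 2 g x) :
    iteratedDeriv 2 (fun z ↦ f z * g z) x =
      f x * iteratedDeriv 2 g x + 2 * deriv f x * deriv g x + iteratedDeriv 2 f x * g x := by
  rw [iteratedDeriv_fun_mul hf hg]
  simp [Finset.sum_range_succ]

lemma iteratedDeriv_eq_of_lt_analyticOrderAt_sub [CharZero 𝕜] {E : Type*} [NormedAddCommGroup E]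
    [NormedSpace 𝕜 E] [CompleteSpace E] {f g : 𝕜 → E} (hf : AnalyticAt 𝕜 f x)
    (hg : AnalyticAt 𝕜 g x) {n : ℕ} (hn : n < analyticOrderAt (f - g) x) :
    iteratedDeriv n f x = iteratedDeriv n g x := by
  have hle : ((n + 1 : ℕ) : ℕ∞) ≤ analyticOrderAt (f - g) x := by
    exact_mod_cast Order.add_one_le_of_lt hn
  have hsub := (natCast_le_analyticOrderAt_iff_iteratedDeriv_eq_zero (hf.sub hg)).1 hle n
    n.lt_succ_self
  rwa [iteratedDeriv_sub hf.contDiffAt hg.contDiffAt, sub_eq_zero] at hsub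

end Calculus

section Moebius

variable {a z w : ℂ}

@[simp]
lemma T_zero (a : ℂ) : T a 0 = a := by
  simp [T]

@[simp]
lemma T_neg_self (a : ℂ) : T (-a) a = 0 := by
  simp [T]

lemma ofReal_one_sub_norm_sq (a : ℂ) : ((1 - ‖a‖ ^ 2 : ℝ) : ℂ) = 1 - conj a * a := by
  push_cast
  rw [conj_mul']

lemma norm_one_add_conj_mul_sq_sub_norm_add_sq (a z : ℂ) :
    ‖1 + conj a * z‖ ^ 2 - ‖z + a‖ ^ 2 = (1 - ‖a‖ ^ 2) * (1 - ‖z‖ ^ 2) := by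
  simp only [← normSq_eq_norm_sq, normSq_apply, add_re, add_im, mul_re, mul_im, conj_re, conj_im,
    one_re, one_im]
  ring

lemma one_sub_norm_sq_pos (ha : a ∈ ball (0 : ℂ) 1) : 0 < 1 - ‖a‖ ^ 2 :=
  sub_pos.2 (pow_lt_one₀ (norm_nonneg a) (mem_ball_zero_iff.1 ha) two_ne_zero)

lemma one_sub_conj_mul_self_ne_zero (ha : a ∈ ball (0 : ℂ) 1) : 1 - conj a * a ≠ 0 := by
  rw [← ofReal_one_sub_norm_sq]
  exact_mod_cast (one_sub_norm_sq_pos ha).ne'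

lemma norm_add_lt_norm_one_add_conj_mul (ha : a ∈ ball (0 : ℂ) 1) (hz : z ∈ ball (0 : ℂ) 1) :
    ‖z + a‖ < ‖1 + conj a * z‖ := by
  refine lt_of_pow_lt_pow_left₀ 2 (norm_nonneg _) (sub_pos.1 ?_)
  rw [norm_one_add_conj_mul_sq_sub_norm_add_sq]
  exact mul_pos (one_sub_norm_sq_pos ha) (one_sub_norm_sq_pos hz)

lemma one_add_conj_mul_ne_zero (ha : a ∈ ball (0 : ℂ) 1) (hz : z ∈ ball (0 : ℂ) 1) :
    1 + conj a * z ≠ 0 :=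
  norm_pos_iff.1 ((norm_nonneg _).trans_lt (norm_add_lt_norm_one_add_conj_mul ha hz))

lemma T_mem_ball (ha : a ∈ ball (0 : ℂ) 1) (hz : z ∈ ball (0 : ℂ) 1) : T a z ∈ ball (0 : ℂ) 1 := by
  rw [mem_ball_zero_iff, T, norm_div,
    div_lt_one (norm_pos_iff.2 (one_add_conj_mul_ne_zero ha hz))]
  exact norm_add_lt_norm_one_add_conj_mul ha hz

lemma neg_mem_ball_zero (ha : a ∈ ball (0 : ℂ) 1) : -a ∈ ball (0 : ℂ) 1 := by
  simpa using ha

lemma T_neg_mul_one_sub_conj_mul (ha : a ∈ ball (0 : ℂ) 1) (hz : z ∈ ball (0 : ℂ) 1) :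
    T (-a) z * (1 - conj a * z) = z - a := by
  have hden : 1 - conj a * z ≠ 0 := by
    simpa [sub_eq_add_neg] using one_add_conj_mul_ne_zero (neg_mem_ball_zero ha) hz
  rw [T, map_neg, neg_mul, ← sub_eq_add_neg, ← sub_eq_add_neg, div_mul_cancel₀ _ hden]

lemma T_T_neg (ha : a ∈ ball (0 : ℂ) 1) (hz : z ∈ ball (0 : ℂ) 1) : T a (T (-a) z) = z := by
  have hden := one_add_conj_mul_ne_zero ha (T_mem_ball (neg_mem_ball_zero ha) hz)
  rw [T, div_eq_iff hden]
  linear_combination T_neg_mul_one_sub_conj_mul ha hz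

lemma T_sub_T (hz : 1 + conj a * z ≠ 0) (hw : 1 + conj a * w ≠ 0) :
    T a z - T a w =
      (z - w) * ((1 - conj a * a) / ((1 + conj a * z) * (1 + conj a * w))) := by
  rw [T, T, div_sub_div _ _ hz hw, mul_div_assoc']
  congr 1
  ring

lemma analyticAt_T (hz : 1 + conj a * z ≠ 0) : AnalyticAt ℂ (T a) z := by
  unfold T
  fun_prop (disch := assumption)

end Moebius

lemma hclass_T {a : ℂ} (ha : a ∈ ball (0 : ℂ) 1) : Hclass (T a) :=
  ⟨fun _ hz ↦
    (analyticAt_T (one_add_conj_mul_ne_zero ha hz)).differentiableAt.differentiableWithinAt,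
    fun _ ↦ T_mem_ball ha⟩

/-- The Schur class: analytic functions on the open unit disk bounded by `1` in modulus. It differs
from `ℋ` only by the unimodular constants. -/
structure SchurClass (g : ℂ → ℂ) : Prop where
  differentiableOn : DifferentiableOn ℂ g (ball 0 1)
  mapsTo : MapsTo g (ball 0 1) (closedBall 0 1)

/-- The inverse step of the Schur algorithm at `z₀`: it sends `g` to the function
`T_γ(T_{-z₀} · g)` with value `γ` at `z₀`. -/
noncomputable def schurStep (z₀ γ : ℂ) (g : ℂ → ℂ) (z : ℂ) : ℂ :=
  T γ (T (-z₀) z * g z)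

section Classes

variable {f g : ℂ → ℂ} {z₀ γ : ℂ}

lemma Hclass.congr (hf : Hclass f) (hgf : EqOn g f (ball 0 1)) : Hclass g :=
  ⟨hf.1.congr hgf, hf.2.congr hgf.symm⟩

lemma Hclass.comp (hf : Hclass f) (hg : Hclass g) : Hclass (f ∘ g) :=
  ⟨hf.1.comp hg.1 hg.2, hf.2.comp hg.2⟩

lemma Hclass.schurClass (hf : Hclass f) : SchurClass f :=
  ⟨hf.1, fun _ hz ↦ ball_subset_closedBall (hf.2 hz)⟩

lemma SchurClass.const {c : ℂ} (hc : c ∈ closedBall (0 : ℂ) 1) : SchurClass fun _ ↦ c :=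
  ⟨differentiableOn_const c, fun _ _ ↦ hc⟩

lemma SchurClass.comp (hg : SchurClass g) (hf : Hclass f) : SchurClass (g ∘ f) :=
  ⟨hg.differentiableOn.comp hf.1 hf.2, hg.mapsTo.comp hf.2⟩

lemma SchurClass.analyticAt (hg : SchurClass g) (hz₀ : z₀ ∈ ball (0 : ℂ) 1) : AnalyticAt ℂ g z₀ :=
  hg.differentiableOn.analyticAt (isOpen_ball.mem_nhds hz₀)

lemma Hclass.mul_schurClass (hf : Hclass f) (hg : SchurClass g) :
    Hclass fun z ↦ f z * g z := by
  refine ⟨hf.1.mul hg.differentiableOn, fun z hz ↦ ?_⟩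
  have hfz := mem_ball_zero_iff.1 (hf.2 hz)
  have hgz := mem_closedBall_zero_iff.1 (hg.mapsTo hz)
  rw [mem_ball_zero_iff, norm_mul]
  exact mul_lt_one_of_nonneg_of_lt_one_left (norm_nonneg _) hfz hgz

-- Maximum modulus: a value of modulus one anywhere forces `‖g‖ = 1` at `z₀`.
lemma SchurClass.hclass_of_mem_ball (hg : SchurClass g) (hz₀ : z₀ ∈ ball (0 : ℂ) 1)
    (hgz₀ : g z₀ ∈ ball (0 : ℂ) 1) : Hclass g := by
  refine ⟨hg.differentiableOn, fun w hw ↦ ?_⟩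
  by_contra hgw
  have one_le : 1 ≤ ‖g w‖ := by simpa using hgw
  have hmax : IsMaxOn (norm ∘ g) (ball 0 1) w := fun z hz ↦
    (mem_closedBall_zero_iff.1 (hg.mapsTo hz)).trans one_le
  have hnorm : ‖g z₀‖ = ‖g w‖ :=
    norm_eqOn_of_isPreconnected_of_isMaxOn (convex_ball (0 : ℂ) 1).isPreconnected isOpen_ball
      hg.differentiableOn hw hmax hz₀
  exact ((mem_ball_zero_iff.1 hgz₀).trans_le one_le).ne hnorm

lemma Hclass.schurClass_dslope (hf : Hclass f) (hf₀ : f 0 = 0) : SchurClass (dslope f 0) := by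
  have hmaps : MapsTo f (ball 0 1) (closedBall (f 0) 1) := hf₀.symm ▸ hf.schurClass.mapsTo
  refine ⟨(differentiableOn_dslope (ball_mem_nhds 0 one_pos)).2 hf.1, fun z hz ↦ ?_⟩
  simpa using norm_dslope_le_div_of_mapsTo_ball hf.1 hmaps hz

lemma SchurClass.hclass_schurStep (hg : SchurClass g) (hz₀ : z₀ ∈ ball (0 : ℂ) 1)
    (hγ : γ ∈ ball (0 : ℂ) 1) : Hclass (schurStep z₀ γ g) :=
  (hclass_T hγ).comp ((hclass_T (neg_mem_ball_zero hz₀)).mul_schurClass hg)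

@[simp]
lemma schurStep_apply_self (z₀ γ : ℂ) (g : ℂ → ℂ) : schurStep z₀ γ g z₀ = γ := by
  simp [schurStep]

lemma eqOn_schurStep (hfg : EqOn f g (ball 0 1)) :
    EqOn (schurStep z₀ γ f) (schurStep z₀ γ g) (ball 0 1) := fun z hz ↦ by
  simp only [schurStep, hfg hz]

lemma Hclass.exists_eqOn_schurStep (hf : Hclass f) (hz₀ : z₀ ∈ ball (0 : ℂ) 1) :
    ∃ g, SchurClass g ∧ EqOn f (schurStep z₀ (f z₀) g) (ball 0 1) := by
  have hfz₀ : f z₀ ∈ ball (0 : ℂ) 1 := hf.2 hz₀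
  set ψ : ℂ → ℂ := T (-f z₀) ∘ f ∘ T z₀ with ψ_def
  have hψ : Hclass ψ := (hclass_T (neg_mem_ball_zero hfz₀)).comp (hf.comp (hclass_T hz₀))
  have hψ₀ : ψ 0 = 0 := by simp [ψ_def]
  refine ⟨dslope ψ 0 ∘ T (-z₀),
    (hψ.schurClass_dslope hψ₀).comp (hclass_T (neg_mem_ball_zero hz₀)), fun z hz ↦ ?_⟩
  have hfactor : T (-z₀) z * dslope ψ 0 (T (-z₀) z) = ψ (T (-z₀) z) := by
    simpa [hψ₀] using sub_smul_dslope ψ 0 (T (-z₀) z)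
  rw [schurStep, Function.comp_apply, hfactor, ψ_def, Function.comp_apply, Function.comp_apply,
    T_T_neg hz₀ hz, T_T_neg hfz₀ (hf.2 hz)]

theorem hclass_iff_exists_eqOn_schurStep (hz₀ : z₀ ∈ ball (0 : ℂ) 1) (hγ : γ ∈ ball (0 : ℂ) 1) :
    Hclass f ∧ f z₀ = γ ↔
      ∃ g, SchurClass g ∧ EqOn f (schurStep z₀ γ g) (ball 0 1) := by
  constructor
  · rintro ⟨hf, rfl⟩
    exact hf.exists_eqOn_schurStep hz₀
  · rintro ⟨g, hg, hfg⟩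
    exact ⟨(hg.hclass_schurStep hz₀ hγ).congr hfg, by rw [hfg hz₀, schurStep_apply_self]⟩

end Classes

section Derivatives

variable {z₀ γ : ℂ} {f g : ℂ → ℂ}

lemma analyticAt_T_neg (hz₀ : z₀ ∈ ball (0 : ℂ) 1) : AnalyticAt ℂ (T (-z₀)) z₀ :=
  analyticAt_T (one_add_conj_mul_ne_zero (neg_mem_ball_zero hz₀) hz₀)

lemma analyticAt_one_add_conj_mul_T_mul (hz₀ : z₀ ∈ ball (0 : ℂ) 1) (hg : AnalyticAt ℂ g z₀) :
    AnalyticAt ℂ (fun z ↦ 1 + conj γ * (T (-z₀) z * g z)) z₀ :=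
  analyticAt_const.add (analyticAt_const.mul ((analyticAt_T_neg hz₀).mul hg))

lemma eventually_one_add_conj_mul_T_mul_ne_zero (hz₀ : z₀ ∈ ball (0 : ℂ) 1)
    (hg : AnalyticAt ℂ g z₀) : ∀ᶠ z in 𝓝 z₀, 1 + conj γ * (T (-z₀) z * g z) ≠ 0 :=
  (analyticAt_one_add_conj_mul_T_mul hz₀ hg).continuousAt.eventually_ne (by simp)

lemma analyticAt_schurStep (hz₀ : z₀ ∈ ball (0 : ℂ) 1) (hg : AnalyticAt ℂ g z₀) :
    AnalyticAt ℂ (schurStep z₀ γ g) z₀ :=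
  (analyticAt_T (by simp)).fun_comp ((analyticAt_T_neg hz₀).mul hg)

-- Clearing denominators makes the derivatives of `schurStep` at `z₀` accessible to the product
-- rule alone.
lemma schurStep_sub_mul_eventuallyEq (hz₀ : z₀ ∈ ball (0 : ℂ) 1) (hg : AnalyticAt ℂ g z₀) :
    (fun z ↦ (schurStep z₀ γ g z - γ) * (1 - conj z₀ * z)) =ᶠ[𝓝 z₀]
      fun z ↦ (z - z₀) * (g z * (1 - conj γ * schurStep z₀ γ g z)) := by
  filter_upwards [eventually_one_add_conj_mul_T_mul_ne_zero (γ := γ) hz₀ hg,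
    isOpen_ball.mem_nhds hz₀] with z hden hz
  have hstep : schurStep z₀ γ g z * (1 + conj γ * (T (-z₀) z * g z)) = T (-z₀) z * g z + γ :=
    div_mul_cancel₀ _ hden
  linear_combination (1 - conj z₀ * z) * hstep +
    g z * (1 - conj γ * schurStep z₀ γ g z) * T_neg_mul_one_sub_conj_mul hz₀ hz

lemma deriv_schurStep_mul (hz₀ : z₀ ∈ ball (0 : ℂ) 1) (hg : AnalyticAt ℂ g z₀) :
    deriv (schurStep z₀ γ g) z₀ * (1 - conj z₀ * z₀) = g z₀ * (1 - conj γ * γ) := by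
  have hF := (analyticAt_schurStep (γ := γ) hz₀ hg).differentiableAt
  have hgd := hg.differentiableAt
  have h := (schurStep_sub_mul_eventuallyEq (γ := γ) hz₀ hg).deriv_eq
  rw [deriv_fun_mul (by fun_prop) (by fun_prop), deriv_fun_mul (by fun_prop) (by fun_prop)] at h
  simpa using h

lemma iteratedDeriv_two_schurStep_mul (hz₀ : z₀ ∈ ball (0 : ℂ) 1) (hg : AnalyticAt ℂ g z₀) :
    iteratedDeriv 2 (schurStep z₀ γ g) z₀ * (1 - conj z₀ * z₀) =
      2 * (conj z₀ * deriv (schurStep z₀ γ g) z₀ + deriv g z₀ * (1 - conj γ * γ) -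
        g z₀ * conj γ * deriv (schurStep z₀ γ g) z₀) := by
  have hF := (analyticAt_schurStep (γ := γ) hz₀ hg).contDiffAt (n := 2)
  have hgd := hg.contDiffAt (n := 2)
  have hF' := hF.differentiableAt two_ne_zero
  have hg' := hg.differentiableAt
  have h := (schurStep_sub_mul_eventuallyEq (γ := γ) hz₀ hg).iteratedDeriv_eq 2
  rw [iteratedDeriv_two_fun_mul (by fun_prop) (by fun_prop),
    iteratedDeriv_two_fun_mul (by fun_prop) (by fun_prop),
    deriv_fun_mul (by fun_prop) (by fun_prop)] at h
  simp only [iteratedDeriv_succ, iteratedDeriv_zero, schurStep_apply_self, sub_self, zero_mul,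
    deriv_sub_const_fun, deriv_const_sub', deriv_const_mul_id', deriv_const_mul_field', deriv_id'',
    deriv_const'] at h ⊢
  linear_combination h

lemma H1_schurStep (hz₀ : z₀ ∈ ball (0 : ℂ) 1) (hγ : γ ∈ ball (0 : ℂ) 1)
    (hg : AnalyticAt ℂ g z₀) : H1 (schurStep z₀ γ g) z₀ = g z₀ := by
  rw [H1, schurStep_apply_self, ofReal_one_sub_norm_sq, ofReal_one_sub_norm_sq,
    div_eq_iff (one_sub_conj_mul_self_ne_zero hγ), mul_comm, deriv_schurStep_mul hz₀ hg]

lemma D2_schurStep (hz₀ : z₀ ∈ ball (0 : ℂ) 1) (hγ : γ ∈ ball (0 : ℂ) 1)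
    (hg : AnalyticAt ℂ g z₀) :
    D2 (schurStep z₀ γ g) z₀ = 2 * (((1 - ‖z₀‖ ^ 2 : ℝ) : ℂ) * deriv g z₀) := by
  have hz₀' := one_sub_conj_mul_self_ne_zero hz₀
  have hγ' := one_sub_conj_mul_self_ne_zero hγ
  simp only [D2, schurStep_apply_self, ofReal_one_sub_norm_sq,
    eq_div_of_mul_eq hz₀' (iteratedDeriv_two_schurStep_mul hz₀ hg),
    eq_div_of_mul_eq hz₀' (deriv_schurStep_mul hz₀ hg)]
  field_simp
  ring

lemma H2_schurStep (hz₀ : z₀ ∈ ball (0 : ℂ) 1) (hγ : γ ∈ ball (0 : ℂ) 1)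
    (hg : AnalyticAt ℂ g z₀) : H2 (schurStep z₀ γ g) z₀ = H1 g z₀ := by
  rw [H2, D2_schurStep hz₀ hγ hg, H1_schurStep hz₀ hγ hg, mul_div_mul_left _ _ two_ne_zero, H1]

lemma H1_congr (hfg : f =ᶠ[𝓝 z₀] g) : H1 f z₀ = H1 g z₀ := by
  simp only [H1, hfg.deriv_eq, hfg.eq_of_nhds]

lemma H2_congr (hfg : f =ᶠ[𝓝 z₀] g) : H2 f z₀ = H2 g z₀ := by
  simp only [H2, D2, H1_congr hfg, hfg.iteratedDeriv_eq, hfg.deriv_eq, hfg.eq_of_nhds]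

lemma analyticOrderAt_sub_add_one_le_schurStep (hz₀ : z₀ ∈ ball (0 : ℂ) 1)
    (hf : AnalyticAt ℂ f z₀) (hg : AnalyticAt ℂ g z₀) :
    analyticOrderAt (f - g) z₀ + 1 ≤
      analyticOrderAt (schurStep z₀ γ f - schurStep z₀ γ g) z₀ := by
  set u : ℂ → ℂ := fun z ↦ (1 - conj γ * γ) /
    ((1 + conj γ * (T (-z₀) z * f z)) * (1 + conj γ * (T (-z₀) z * g z))) with u_def
  have hu : AnalyticAt ℂ u z₀ :=
    analyticAt_const.div ((analyticAt_one_add_conj_mul_T_mul hz₀ hf).mul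
      (analyticAt_one_add_conj_mul_T_mul hz₀ hg)) (by simp)
  have hτ : AnalyticAt ℂ (T (-z₀)) z₀ := analyticAt_T_neg hz₀
  have one_le : 1 ≤ analyticOrderAt (T (-z₀)) z₀ :=
    Order.one_le_iff_ne_zero.2 (analyticOrderAt_ne_zero.2 ⟨hτ, T_neg_self z₀⟩)
  have hfactor : schurStep z₀ γ f - schurStep z₀ γ g =ᶠ[𝓝 z₀] (f - g) * T (-z₀) * u := by
    filter_upwards [eventually_one_add_conj_mul_T_mul_ne_zero (γ := γ) hz₀ hf,
      eventually_one_add_conj_mul_T_mul_ne_zero (γ := γ) hz₀ hg] with z hfz hgz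
    simp only [Pi.sub_apply, Pi.mul_apply, schurStep, T_sub_T hfz hgz, u_def]
    ring
  rw [analyticOrderAt_congr hfactor, analyticOrderAt_mul ((hf.sub hg).mul hτ) hu,
    analyticOrderAt_mul (hf.sub hg) hτ]
  exact (add_le_add_right one_le _).trans le_self_add

end Derivatives

section Parametrization

variable {z₀ γ₀ γ₁ γ₂ : ℂ} {f : ℂ → ℂ}

theorem hclass_H1_iff_exists_eqOn_schurStep (hz₀ : z₀ ∈ ball (0 : ℂ) 1)
    (hγ₀ : γ₀ ∈ ball (0 : ℂ) 1) (hγ₁ : γ₁ ∈ ball (0 : ℂ) 1) :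
    Hclass f ∧ f z₀ = γ₀ ∧ H1 f z₀ = γ₁ ↔
      ∃ g, (Hclass g ∧ g z₀ = γ₁) ∧ EqOn f (schurStep z₀ γ₀ g) (ball 0 1) := by
  have H1_eq {g : ℂ → ℂ} (hg : SchurClass g) (hfg : EqOn f (schurStep z₀ γ₀ g) (ball 0 1)) :
      H1 f z₀ = g z₀ :=
    (H1_congr (hfg.eventuallyEq_of_mem (isOpen_ball.mem_nhds hz₀))).trans
      (H1_schurStep hz₀ hγ₀ (hg.analyticAt hz₀))
  rw [← and_assoc, hclass_iff_exists_eqOn_schurStep hz₀ hγ₀]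
  constructor
  · rintro ⟨⟨g, hg, hfg⟩, rfl⟩
    rw [H1_eq hg hfg] at hγ₁ ⊢
    exact ⟨g, ⟨hg.hclass_of_mem_ball hz₀ hγ₁, rfl⟩, hfg⟩
  · rintro ⟨g, ⟨hg, rfl⟩, hfg⟩
    exact ⟨⟨g, hg.schurClass, hfg⟩, H1_eq hg.schurClass hfg⟩

theorem hclass_H2_iff_exists_eqOn_schurStep (hz₀ : z₀ ∈ ball (0 : ℂ) 1)
    (hγ₀ : γ₀ ∈ ball (0 : ℂ) 1) (hγ₁ : γ₁ ∈ ball (0 : ℂ) 1) :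
    Hclass f ∧ f z₀ = γ₀ ∧ H1 f z₀ = γ₁ ∧ H2 f z₀ = γ₂ ↔
      ∃ g, (Hclass g ∧ g z₀ = γ₁ ∧ H1 g z₀ = γ₂) ∧ EqOn f (schurStep z₀ γ₀ g) (ball 0 1) := by
  have H2_eq {g : ℂ → ℂ} (hg : Hclass g) (hfg : EqOn f (schurStep z₀ γ₀ g) (ball 0 1)) :
      H2 f z₀ = H1 g z₀ :=
    (H2_congr (hfg.eventuallyEq_of_mem (isOpen_ball.mem_nhds hz₀))).trans
      (H2_schurStep hz₀ hγ₀ (hg.schurClass.analyticAt hz₀))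
  rw [← and_assoc (a := f z₀ = γ₀), ← and_assoc,
    hclass_H1_iff_exists_eqOn_schurStep hz₀ hγ₀ hγ₁]
  constructor
  · rintro ⟨⟨g, ⟨hg, hgz₀⟩, hfg⟩, hH2⟩
    exact ⟨g, ⟨hg, hgz₀, (H2_eq hg hfg).symm.trans hH2⟩, hfg⟩
  · rintro ⟨g, ⟨hg, hgz₀, hH1⟩, hfg⟩
    exact ⟨⟨g, ⟨hg, hgz₀⟩, hfg⟩, (H2_eq hg hfg).trans hH1⟩

theorem hclass_H2_iff_exists_eqOn_schurStep_schurStep_schurStep (hz₀ : z₀ ∈ ball (0 : ℂ) 1)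
    (hγ₀ : γ₀ ∈ ball (0 : ℂ) 1) (hγ₁ : γ₁ ∈ ball (0 : ℂ) 1) (hγ₂ : γ₂ ∈ ball (0 : ℂ) 1) :
    Hclass f ∧ f z₀ = γ₀ ∧ H1 f z₀ = γ₁ ∧ H2 f z₀ = γ₂ ↔
      ∃ k, SchurClass k ∧
        EqOn f (schurStep z₀ γ₀ (schurStep z₀ γ₁ (schurStep z₀ γ₂ k))) (ball 0 1) := by
  simp only [hclass_H2_iff_exists_eqOn_schurStep hz₀ hγ₀ hγ₁,
    hclass_H1_iff_exists_eqOn_schurStep hz₀ hγ₁ hγ₂, hclass_iff_exists_eqOn_schurStep hz₀ hγ₂]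
  constructor
  · rintro ⟨g, ⟨h, ⟨k, hk, hhk⟩, hgh⟩, hfg⟩
    exact ⟨k, hk, hfg.trans (eqOn_schurStep (hgh.trans (eqOn_schurStep hhk)))⟩
  · rintro ⟨k, hk, hfk⟩
    exact ⟨_, ⟨_, ⟨k, hk, eqOn_refl _ _⟩, eqOn_refl _ _⟩, hfk⟩

lemma fE_eq_schurStep (z₀ γ₀ γ₁ γ₂ ε : ℂ) :
    fE z₀ γ₀ γ₁ γ₂ ε =
      schurStep z₀ γ₀ (schurStep z₀ γ₁ (schurStep z₀ γ₂ fun _ ↦ ε)) := by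
  ext z
  simp only [fE, schurStep, mul_comm ε]

lemma iteratedDeriv_three_schurStep_eq_fE (hz₀ : z₀ ∈ ball (0 : ℂ) 1) {k : ℂ → ℂ}
    (hk : AnalyticAt ℂ k z₀) :
    iteratedDeriv 3 (schurStep z₀ γ₀ (schurStep z₀ γ₁ (schurStep z₀ γ₂ k))) z₀ =
      iteratedDeriv 3 (fE z₀ γ₀ γ₁ γ₂ (k z₀)) z₀ := by
  have step {g : ℂ → ℂ} {γ : ℂ} (hg : AnalyticAt ℂ g z₀) : AnalyticAt ℂ (schurStep z₀ γ g) z₀ :=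
    analyticAt_schurStep hz₀ hg
  have hc : AnalyticAt ℂ (fun _ ↦ k z₀) z₀ := analyticAt_const
  rw [fE_eq_schurStep]
  refine iteratedDeriv_eq_of_lt_analyticOrderAt_sub (step (step (step hk)))
    (step (step (step hc))) ?_
  have one_le : 1 ≤ analyticOrderAt (k - fun _ ↦ k z₀) z₀ :=
    Order.one_le_iff_ne_zero.2 (analyticOrderAt_ne_zero.2 ⟨hk.sub hc, sub_self _⟩)
  calc ((3 : ℕ) : ℕ∞)
    _ < 1 + 1 + 1 + 1 := by norm_num
    _ ≤ analyticOrderAt (k - fun _ ↦ k z₀) z₀ + 1 + 1 + 1 := by gcongr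
    _ ≤ analyticOrderAt (schurStep z₀ γ₂ k - schurStep z₀ γ₂ fun _ ↦ k z₀) z₀ + 1 + 1 := by
      gcongr
      exact analyticOrderAt_sub_add_one_le_schurStep hz₀ hk hc
    _ ≤ analyticOrderAt (schurStep z₀ γ₁ (schurStep z₀ γ₂ k) -
          schurStep z₀ γ₁ (schurStep z₀ γ₂ fun _ ↦ k z₀)) z₀ + 1 := by
      gcongr
      exact analyticOrderAt_sub_add_one_le_schurStep hz₀ (step hk) (step hc)
    _ ≤ _ := analyticOrderAt_sub_add_one_le_schurStep hz₀ (step (step hk)) (step (step hc))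

end Parametrization

/-- The functions `f_ε`, `|ε| ≤ 1`, belong to `ℋ`, interpolate the data
`(γ₀, γ₁, γ₂)` at `z₀`, and their third derivatives at `z₀` sweep out exactly the
variability region `{f'''(z₀) : f ∈ ℋ, f(z₀) = γ₀, H¹f(z₀) = γ₁, H²f(z₀) = γ₂}`. -/
theorem schwarz_pick_third_extremals (z₀ γ₀ γ₁ γ₂ : ℂ)
    (hz₀ : z₀ ∈ ball (0 : ℂ) 1) (hγ₀ : γ₀ ∈ ball (0 : ℂ) 1)
    (hγ₁ : γ₁ ∈ ball (0 : ℂ) 1) (hγ₂ : γ₂ ∈ ball (0 : ℂ) 1) :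
    (∀ ε ∈ closedBall (0 : ℂ) 1,
        Hclass (fE z₀ γ₀ γ₁ γ₂ ε) ∧ fE z₀ γ₀ γ₁ γ₂ ε z₀ = γ₀ ∧
          H1 (fE z₀ γ₀ γ₁ γ₂ ε) z₀ = γ₁ ∧ H2 (fE z₀ γ₀ γ₁ γ₂ ε) z₀ = γ₂) ∧
      {w : ℂ | ∃ f : ℂ → ℂ, Hclass f ∧ f z₀ = γ₀ ∧ H1 f z₀ = γ₁ ∧ H2 f z₀ = γ₂ ∧
          iteratedDeriv 3 f z₀ = w} =
        {w : ℂ | ∃ ε ∈ closedBall (0 : ℂ) 1,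
          iteratedDeriv 3 (fE z₀ γ₀ γ₁ γ₂ ε) z₀ = w} := by
  have data_iff (f : ℂ → ℂ) := hclass_H2_iff_exists_eqOn_schurStep_schurStep_schurStep (f := f)
    hz₀ hγ₀ hγ₁ hγ₂
  have fE_data (ε : ℂ) (hε : ε ∈ closedBall (0 : ℂ) 1) :=
    (data_iff (fE z₀ γ₀ γ₁ γ₂ ε)).2
      ⟨fun _ ↦ ε, SchurClass.const hε, fun z _ ↦ by rw [fE_eq_schurStep]⟩
  refine ⟨fE_data, Subset.antisymm ?_ ?_⟩
  · rintro _ ⟨f, hf, hf₀, hf₁, hf₂, rfl⟩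
    obtain ⟨k, hk, hfk⟩ := (data_iff f).1 ⟨hf, hf₀, hf₁, hf₂⟩
    refine ⟨k z₀, hk.mapsTo hz₀, ?_⟩
    rw [(hfk.eventuallyEq_of_mem (isOpen_ball.mem_nhds hz₀)).iteratedDeriv_eq,
      iteratedDeriv_three_schurStep_eq_fE hz₀ (hk.analyticAt hz₀)]
  · rintro _ ⟨ε, hε, rfl⟩
    obtain ⟨hf, hf₀, hf₁, hf₂⟩ := fE_data ε hε
    exact ⟨_, hf, hf₀, hf₁, hf₂, rfl⟩
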